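/- Every orientation-preserving diffeomorphism of the circle S¹ extends to a diffeomorphism of the closed disk D². -/

import Mathlib

open Metric Complex

/-!
Join the identity to the lift `f` through the maps `x ↦ x + s (f x - x)`, `0 ≤ s ≤ 1`: each has
positive derivative and commutes with translation by `2π`, so it is again the lift of a circle
diffeomorphism. Acting on the circle of radius `r` by the member of this isotopy with parameter
`s = s(r)`, where `s = 0` for `r ≤ 1/2` and `s = 1` for `r = 1`, gives a norm-preserving bijection
of the plane which is the identity near the origin, the only point where polar coordinates are not
smooth. Its inverse acts by the inverse lifts, which depend smoothly on `r` and the angle by the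
inverse function theorem applied to `(r, x) ↦ (r, φ r x)`.
-/

open scoped AddConstMap Real Topology

noncomputable section

section InverseFunction

variable {𝕜 E F G : Type*} [RCLike 𝕜]
  [NormedAddCommGroup E] [NormedSpace 𝕜 E] [CompleteSpace E]
  [NormedAddCommGroup F] [NormedSpace 𝕜 F] [NormedAddCommGroup G] [NormedSpace 𝕜 G]
  {n : WithTop ℕ∞}

theorem contDiff_equiv_symm (e : E ≃ F) {e' : E → E ≃L[𝕜] F} (hn : n ≠ 0) (he : ContDiff 𝕜 n e)
    (he' : ∀ x, HasFDerivAt e (e' x : E →L[𝕜] F) x) : ContDiff 𝕜 n e.symm :=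
  have hopen : IsOpenMap e := isOpenMap_of_hasStrictFDerivAt_equiv fun x ↦
    he.contDiffAt.hasStrictFDerivAt' (he' x) hn
  (e.toHomeomorphOfContinuousOpen he.continuous hopen).contDiff_symm he' he

theorem contDiff_uncurry_symm [CompleteSpace F] {φ : E → F ≃ G} {φ' : E → F → F ≃L[𝕜] G}
    (hn : n ≠ 0) (hφ : ContDiff 𝕜 n fun p : E × F ↦ φ p.1 p.2)
    (hφ' : ∀ t x, HasFDerivAt (φ t) (φ' t x : F →L[𝕜] G) x) :
    ContDiff 𝕜 n fun p : E × G ↦ (φ p.1).symm p.2 := by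
  let Φ : E × F ≃ E × G := (Equiv.refl E).prodShear φ
  let D (p : E × F) := fderiv 𝕜 (fun p : E × F ↦ φ p.1 p.2) p
  let Φ' (p : E × F) : (E × F) ≃L[𝕜] E × G :=
    (ContinuousLinearEquiv.refl 𝕜 E).skewProd (φ' p.1 p.2) (D p ∘L .inl 𝕜 E F)
  have hD (p : E × F) : HasFDerivAt (fun p : E × F ↦ φ p.1 p.2) (D p) p :=
    (hφ.differentiable hn p).hasFDerivAt
  have hD_inr (p : E × F) : D p ∘L .inr 𝕜 E F = φ' p.1 p.2 :=
    ((hD p).comp (f := (p.1, ·)) p.2 (hasFDerivAt_prodMk_right p.1 p.2)).unique (hφ' p.1 p.2)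
  have hD_apply (p v : E × F) : D p v = φ' p.1 p.2 v.2 + D p (v.1, 0) :=
    calc D p v = D p (0, v.2) + D p (v.1, 0) := by simp [← map_add]
      _ = φ' p.1 p.2 v.2 + D p (v.1, 0) := by
        congr 1
        exact DFunLike.congr_fun (hD_inr p) v.2
  have hΦ' (p : E × F) : HasFDerivAt Φ (Φ' p : E × F →L[𝕜] E × G) p := by
    have hprod : (Φ' p : E × F →L[𝕜] E × G) = (ContinuousLinearMap.fst 𝕜 E F).prod (D p) :=
      ContinuousLinearMap.ext fun v ↦ by simp [Φ', hD_apply p v]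
    rw [hprod]
    exact hasFDerivAt_fst.prodMk (hD p)
  exact contDiff_snd.comp (contDiff_equiv_symm Φ hn (contDiff_fst.prodMk hφ) hΦ')

end InverseFunction

section PolarCoordinates

variable {L M : Type*} [FunLike L ℝ ℝ] [FunLike M ℝ ℝ] {n : WithTop ℕ∞}

/-- The map of the plane that preserves each circle about the origin and acts on the circle of
radius `r` as the circle map with lift `φ r`, that is `r e^{iθ} ↦ r e^{i φ r θ}`. -/
def angularMap (φ : ℝ → L) (z : ℂ) : ℂ :=
  ‖z‖ * exp (φ ‖z‖ (arg z) * I)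

theorem norm_angularMap (φ : ℝ → L) (z : ℂ) : ‖angularMap φ z‖ = ‖z‖ := by
  simp [angularMap, norm_exp_ofReal_mul_I]

variable [AddConstMapClass L ℝ ℝ (2 * π) (2 * π)]

theorem angularMap_polar (φ : ℝ → L) {r : ℝ} (hr : 0 ≤ r) (θ : ℝ) :
    angularMap φ (r * exp (θ * I)) = r * exp (φ r θ * I) := by
  rcases hr.eq_or_lt with rfl | hr
  · simp [angularMap]
  have hnorm : ‖(r * exp (θ * I) : ℂ)‖ = r := by
    rw [norm_mul, norm_exp_ofReal_mul_I, mul_one, norm_real, Real.norm_of_nonneg hr.le]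
  have harg : arg (r * exp (θ * I)) = θ - toIocDiv Real.two_pi_pos (-π) θ • (2 * π) := by
    rw [arg_real_mul _ hr, arg_exp_mul_I, toIocMod]
  rw [angularMap, hnorm, harg, AddConstMapClass.map_sub_zsmul]
  congr 1
  push_cast
  simpa using exp_mul_I_periodic.sub_zsmul_eq (x := (φ r θ : ℂ)) (toIocDiv Real.two_pi_pos (-π) θ)

theorem exists_contDiffAt_polarAngle {z : ℂ} (hz : z ≠ 0) :
    ∃ α : ℂ → ℝ, ContDiffAt ℝ n α z ∧ ∀ w : ℂ, ‖w‖ * exp (α w * I) = w := by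
  refine ⟨fun w ↦ (log (w / z)).im + arg z, ?_, fun w ↦ ?_⟩
  · have hlog : ContDiffAt ℝ n log (z / z) := by
      rw [div_self hz]
      exact (contDiffAt_log one_mem_slitPlane).restrict_scalars ℝ
    have hdiv : ContDiffAt ℝ n (fun w : ℂ ↦ w / z) z := contDiffAt_id.div_const z
    have him := imCLM.contDiff.contDiffAt.comp z (hlog.comp (f := (· / z)) z hdiv)
    exact him.add contDiffAt_const
  · calc (‖w‖ * exp (((log (w / z)).im + arg z : ℝ) * I) : ℂ)
        = ‖w / z‖ * exp (arg (w / z) * I) * (‖z‖ * exp (arg z * I)) := by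
          rw [log_im, ofReal_add, add_mul, exp_add, mul_mul_mul_comm, ← ofReal_mul, ← norm_mul,
            div_mul_cancel₀ _ hz]
      _ = w := by rw [norm_mul_exp_arg_mul_I, norm_mul_exp_arg_mul_I, div_mul_cancel₀ _ hz]

theorem contDiff_angularMap {φ : ℝ → L} (hφ : ContDiff ℝ n fun p : ℝ × ℝ ↦ φ p.1 p.2)
    (hφ₀ : ∀ᶠ r in 𝓝 0, ∀ x, φ r x = x) : ContDiff ℝ n (angularMap φ) := by
  rw [contDiff_iff_contDiffAt]
  intro z
  rcases eq_or_ne z 0 with rfl | hz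
  · have hid : angularMap φ =ᶠ[𝓝 0] id := by
      filter_upwards [(tendsto_norm_zero (E := ℂ)).eventually hφ₀] with w hw
      rw [angularMap, hw, norm_mul_exp_arg_mul_I, id]
    exact contDiffAt_id.congr_of_eventuallyEq hid
  · obtain ⟨α, hα, hpolar⟩ := exists_contDiffAt_polarAngle (n := n) hz
    have hnorm : ContDiffAt ℝ n (fun w : ℂ ↦ ‖w‖) z := contDiffAt_norm ℝ hz
    have hangle : ContDiffAt ℝ n (fun w ↦ φ ‖w‖ (α w)) z :=
      hφ.contDiffAt.comp z (hnorm.prodMk hα)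
    have heq : angularMap φ = fun w ↦ (‖w‖ : ℂ) * exp (φ ‖w‖ (α w) * I) := by
      funext w
      conv_lhs => rw [← hpolar w, angularMap_polar φ (norm_nonneg w)]
    rw [heq]
    exact (ofRealCLM.contDiff.contDiffAt.comp z hnorm).mul
      ((ofRealCLM.contDiff.contDiffAt.comp z hangle).mul contDiffAt_const).cexp

theorem leftInverse_angularMap {φ : ℝ → M} {ψ : ℝ → L} (h : ∀ r, Function.LeftInverse (ψ r) (φ r)) :
    Function.LeftInverse (angularMap ψ) (angularMap φ) := fun z ↦ by
  rw [angularMap.eq_def φ, angularMap_polar ψ (norm_nonneg z), h, norm_mul_exp_arg_mul_I]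

/-- `angularMap` for a family of lifts of circle homeomorphisms; its inverse is the angular map
of the inverse lifts. -/
def angularEquiv (φ : ℝ → ℝ ≃+c[2 * π, 2 * π] ℝ) : ℂ ≃ ℂ where
  toFun := angularMap φ
  invFun := angularMap fun r ↦ (φ r).symm
  left_inv := leftInverse_angularMap fun r ↦ (φ r).symm_apply_apply
  right_inv := leftInverse_angularMap fun r ↦ (φ r).apply_symm_apply

theorem contDiff_angularEquiv_symm {φ : ℝ → ℝ ≃+c[2 * π, 2 * π] ℝ} (hn : n ≠ 0)
    (hφ : ContDiff ℝ n fun p : ℝ × ℝ ↦ φ p.1 p.2) (hφ' : ∀ r x, deriv (φ r) x ≠ 0)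
    (hφ₀ : ∀ᶠ r in 𝓝 0, ∀ x, φ r x = x) : ContDiff ℝ n (angularEquiv φ).symm := by
  have hsymm : ContDiff ℝ n fun p : ℝ × ℝ ↦ (φ p.1).symm p.2 :=
    contDiff_uncurry_symm (φ := fun r ↦ (φ r).toEquiv) hn hφ fun r x ↦
      (differentiableAt_of_deriv_ne_zero (hφ' r x)).hasDerivAt.hasFDerivAt_equiv (hφ' r x)
  refine contDiff_angularMap (φ := fun r ↦ (φ r).symm) hsymm (hφ₀.mono fun r hr x ↦ ?_)
  rw [(φ r).symm_apply_eq, hr]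

end PolarCoordinates

section Lifts

theorem surjective_of_continuous_of_map_add_const {g : ℝ → ℝ} {c : ℝ} (hc : c ≠ 0)
    (hg : Continuous g) (hgc : ∀ x, g (x + c) = g x + c) : Function.Surjective g := fun y ↦ by
  have hper : Function.Periodic (fun x ↦ g x - x) c := fun x ↦ by
    simp only [hgc, add_sub_add_right_eq_sub]
  obtain ⟨C, hC⟩ := (hper.isBounded_of_continuous hc (by fun_prop)).exists_norm_le
  have hbound (x : ℝ) : |g x - x| ≤ C := hC _ ⟨x, rfl⟩
  refine mem_range_of_exists_le_of_exists_ge hg ⟨y - C, ?_⟩ ⟨y + C, ?_⟩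
  · linarith [(abs_le.1 (hbound (y - C))).2]
  · linarith [(abs_le.1 (hbound (y + C))).1]

/-- A real function with positive derivative that commutes with translation by `c`, as an
equivalence commuting with that translation. -/
def addConstEquivOfDerivPos (g : ℝ → ℝ) {c : ℝ} (hc : c ≠ 0) (hg : ∀ x, 0 < deriv g x)
    (hgc : ∀ x, g (x + c) = g x + c) : ℝ ≃+c[c, c] ℝ where
  toEquiv := .ofBijective g ⟨(strictMono_of_deriv_pos hg).injective,
    surjective_of_continuous_of_map_add_const hc
      (continuous_iff_continuousAt.2 fun x ↦
        (differentiableAt_of_deriv_ne_zero (hg x).ne').continuousAt) hgc⟩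
  map_add_const' := hgc

/-- The isotopy from the identity (for `t ≤ 1 / 2`) to `f` (for `1 ≤ t`) along straight lines,
reparametrized so as to be smooth in `t`. -/
def straightLineIsotopy (f : ℝ → ℝ) (t x : ℝ) : ℝ :=
  x + Real.smoothTransition (2 * t - 1) * (f x - x)

variable {f : ℝ → ℝ}

theorem straightLineIsotopy_of_le_half {t : ℝ} (ht : t ≤ 1 / 2) (x : ℝ) :
    straightLineIsotopy f t x = x := by
  rw [straightLineIsotopy, Real.smoothTransition.zero_of_nonpos (by linarith), zero_mul, add_zero]

theorem straightLineIsotopy_one (x : ℝ) : straightLineIsotopy f 1 x = f x := by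
  rw [straightLineIsotopy, Real.smoothTransition.one_of_one_le (by norm_num), one_mul,
    add_sub_cancel]

theorem straightLineIsotopy_add_const {c : ℝ} (hf : ∀ x, f (x + c) = f x + c) (t x : ℝ) :
    straightLineIsotopy f t (x + c) = straightLineIsotopy f t x + c := by
  simp only [straightLineIsotopy, hf]
  ring

theorem contDiff_straightLineIsotopy {n : ℕ∞} (hf : ContDiff ℝ n f) :
    ContDiff ℝ n fun p : ℝ × ℝ ↦ straightLineIsotopy f p.1 p.2 := by
  have hcutoff : ContDiff ℝ n fun p : ℝ × ℝ ↦ Real.smoothTransition (2 * p.1 - 1) :=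
    Real.smoothTransition.contDiff.comp (by fun_prop)
  exact contDiff_snd.add (hcutoff.mul ((hf.comp contDiff_snd).sub contDiff_snd))

theorem deriv_straightLineIsotopy_pos {x : ℝ} (hf : 0 < deriv f x) (t : ℝ) :
    0 < deriv (straightLineIsotopy f t) x := by
  set s := Real.smoothTransition (2 * t - 1)
  have hderiv : HasDerivAt (straightLineIsotopy f t) (1 + s * (deriv f x - 1)) x :=
    (hasDerivAt_id x).add
      (((differentiableAt_of_deriv_ne_zero hf.ne').hasDerivAt.sub (hasDerivAt_id x)).const_mul s)
  have hs : 0 ≤ 1 - s := sub_nonneg.2 (Real.smoothTransition.le_one _)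
  calc 0 < (1 - s) • 1 + s • deriv f x :=
        convex_Ioi (0 : ℝ) one_pos hf hs (Real.smoothTransition.nonneg _) (sub_add_cancel 1 s)
    _ = deriv (straightLineIsotopy f t) x := by
        rw [hderiv.deriv, smul_eq_mul, smul_eq_mul]
        ring

end Lifts

theorem stmt_4_general {n : ℕ∞} (hn : n ≠ 0) {f : ℝ → ℝ} (hf : ContDiff ℝ n f)
    (hderiv : ∀ x, 0 < deriv f x) (hper : ∀ x, f (x + 2 * π) = f x + 2 * π) :
    ∃ F : ℂ ≃ ℂ, ContDiff ℝ n F ∧ ContDiff ℝ n F.symm ∧ (∀ z, ‖F z‖ = ‖z‖) ∧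
      ∀ θ : ℝ, F (exp (θ * I)) = exp (f θ * I) := by
  have hpos (t x : ℝ) : 0 < deriv (straightLineIsotopy f t) x :=
    deriv_straightLineIsotopy_pos (hderiv x) t
  let φ (t : ℝ) : ℝ ≃+c[2 * π, 2 * π] ℝ := addConstEquivOfDerivPos (straightLineIsotopy f t)
    Real.two_pi_pos.ne' (hpos t) (straightLineIsotopy_add_const hper t)
  have hφ : ContDiff ℝ n fun p : ℝ × ℝ ↦ φ p.1 p.2 := contDiff_straightLineIsotopy hf
  have hφ₀ : ∀ᶠ t in 𝓝 0, ∀ x, φ t x = x := by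
    filter_upwards [Iic_mem_nhds (one_half_pos (α := ℝ))] with t ht
    exact straightLineIsotopy_of_le_half ht
  refine ⟨angularEquiv φ, contDiff_angularMap hφ hφ₀,
    contDiff_angularEquiv_symm (by exact_mod_cast hn) hφ (fun t x ↦ (hpos t x).ne') hφ₀,
    norm_angularMap φ, fun θ ↦ ?_⟩
  have hφ₁ : φ 1 θ = f θ := straightLineIsotopy_one θ
  have hpolar : angularEquiv φ ((1 : ℝ) * exp (θ * I)) = (1 : ℝ) * exp (φ 1 θ * I) :=
    angularMap_polar φ zero_le_one θ
  simpa [hφ₁] using hpolar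

end

/-- Smale's theorem: every orientation-preserving diffeomorphism of the circle
S¹ extends to a diffeomorphism of the closed disk D². The circle diffeomorphism
is encoded by its lift `f : ℝ → ℝ`, a smooth, strictly increasing map with
nonvanishing derivative satisfying `f (x + 2π) = f x + 2π` (orientation-
preserving). The closed disk is the closed unit ball in ℂ ≅ ℝ², and the
extension is a smooth map of the disk onto itself with smooth inverse,
restricting on the boundary circle to the given circle diffeomorphism. -/
theorem stmt_4 (f : ℝ → ℝ)
    (hf : ContDiff ℝ (⊤ : ℕ∞) f) (hmono : StrictMono f)
    (hderiv : ∀ x, deriv f x ≠ 0)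
    (hper : ∀ x, f (x + 2 * Real.pi) = f x + 2 * Real.pi) :
    ∃ F G : ℂ → ℂ,
      ContDiffOn ℝ (⊤ : ℕ∞) F (closedBall 0 1) ∧
      ContDiffOn ℝ (⊤ : ℕ∞) G (closedBall 0 1) ∧
      Set.MapsTo F (closedBall 0 1) (closedBall 0 1) ∧
      Set.MapsTo G (closedBall 0 1) (closedBall 0 1) ∧
      (∀ z ∈ closedBall (0 : ℂ) 1, G (F z) = z) ∧
      (∀ z ∈ closedBall (0 : ℂ) 1, F (G z) = z) ∧
      (∀ θ : ℝ, F (Complex.exp (θ * Complex.I)) =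
        Complex.exp ((f θ : ℂ) * Complex.I)) := by
  have hpos (x : ℝ) : 0 < deriv f x := hmono.monotone.deriv_nonneg.lt_of_ne' (hderiv x)
  obtain ⟨F, hF, hF', hnorm, hcircle⟩ := stmt_4_general (n := ⊤) ENat.top_ne_zero hf hpos hper
  have hnorm' (z : ℂ) : ‖F.symm z‖ = ‖z‖ := by rw [← hnorm, F.apply_symm_apply]
  exact ⟨F, F.symm, hF.contDiffOn, hF'.contDiffOn,
    fun z ↦ by simp [hnorm], fun z ↦ by simp [hnorm'],
    fun z _ ↦ F.symm_apply_apply z, fun z _ ↦ F.apply_symm_apply z, hcircle⟩
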